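/- arXiv:2411.16040 — 2 statements merged into one kernel-verified Lean document; each statement's English description precedes it below -/
import Mathlib

section
/- Let (𝓑₁, 𝓑₀) be a Rota-Baxter operator on a crossed module of groups (H, G, t, Φ). Define p ·_{𝓑₁} q = p·𝓑₁(p)·q·𝓑₁(p)⁻¹ on H, a ·_{𝓑₀} b = a·𝓑₀(a)·b·𝓑₀(a)⁻¹ on G, and Φ̂(a)(p) = Φ(a·𝓑₀(a))(p·𝓑₁(p)) · (Φ(𝓑₀(a))(𝓑₁(p)))⁻¹. Then for all a ∈ G and p, q ∈ H: (1) t(p ·_{𝓑₁} q) = t(p) ·_{𝓑₀} t(q); (2) t(Φ̂(a)(p)) = a ·_{𝓑₀} t(p) ·_{𝓑₀} a†, where a† = 𝓑₀(a)⁻¹·a⁻¹·𝓑₀(a); (3) Φ̂(t(p))(q) = p ·_{𝓑₁} q ·_{𝓑₁} p†, where p† = 𝓑₁(p)⁻¹·p⁻¹·𝓑₁(p). -/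
/-- A crossed module of groups. -/
structure IsCrossedModule {H G : Type*} [Group H] [Group G]
    (t : H → G) (Φ : G → H → H) : Prop where
  t_mul : ∀ p q : H, t (p * q) = t p * t q
  Φ_mul_hom : ∀ (a : G) (p q : H), Φ a (p * q) = Φ a p * Φ a q
  Φ_bij : ∀ a : G, Function.Bijective (Φ a)
  Φ_one : ∀ p : H, Φ 1 p = p
  Φ_mul : ∀ (a b : G) (p : H), Φ (a * b) p = Φ a (Φ b p)
  peiffer : ∀ p q : H, Φ (t p) q = p * q * p⁻¹
  equivar : ∀ (a : G) (p : H), t (Φ a p) = a * t p * a⁻¹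

/-- Rota-Baxter operator on a group. -/
def IsRotaBaxter {G : Type*} [Group G] (B : G → G) : Prop :=
  ∀ a b : G, B a * B b = B (a * B a * b * (B a)⁻¹)

/-- Rota-Baxter operator on a crossed module of groups. -/
structure IsCMRotaBaxter {H G : Type*} [Group H] [Group G]
    (t : H → G) (Φ : G → H → H) (B₁ : H → H) (B₀ : G → G) : Prop where
  rb₁ : IsRotaBaxter B₁
  rb₀ : IsRotaBaxter B₀
  t_comm : ∀ p : H, t (B₁ p) = B₀ (t p)
  compat : ∀ (a : G) (p : H),
    Φ (B₀ a) (B₁ p) = B₁ (Φ (a * B₀ a) (p * B₁ p) * (Φ (B₀ a) (B₁ p))⁻¹)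

/-- The descended multiplication `p ·_B q = p · B(p) · q · B(p)⁻¹`. -/
def mulB {X : Type*} [Group X] (B : X → X) (p q : X) : X := p * B p * q * (B p)⁻¹

/-- The descended action `Φ̂(a)(p) = Φ(a·B₀(a))(p·B₁(p)) · (Φ(B₀(a))(B₁(p)))⁻¹`. -/
def hatPhi {H G : Type*} [Group H] [Group G] (Φ : G → H → H)
    (B₁ : H → H) (B₀ : G → G) (a : G) (p : H) : H :=
  Φ (a * B₀ a) (p * B₁ p) * (Φ (B₀ a) (B₁ p))⁻¹

/-!
For a Rota-Baxter operator, `B` and `a ↦ a * B a` both turn the descended product into the ordinary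
one. Writing an element as `x = (x * B x) * (B x)⁻¹` therefore shows that conjugation in the
descended group is the descended action `hatPhi` of the conjugation action. The identities for
`hatPhi` now follow from its naturality: equivariance of `t` carries `Φ` to conjugation on `G`, and
the Peiffer identity says that `Φ` pulled back along `t` is conjugation on `H`.
-/

/-- The descended inverse `a† = B(a)⁻¹ · a⁻¹ · B(a)`: for a Rota-Baxter operator `B`, the inverse of
`a` with respect to `mulB B`. -/
def invB {X : Type*} [Group X] (B : X → X) (a : X) : X := (B a)⁻¹ * a⁻¹ * B a

namespace IsRotaBaxter

variable {X : Type*} [Group X] {B : X → X}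

theorem map_mulB (hB : IsRotaBaxter B) (a b : X) : B (mulB B a b) = B a * B b :=
  (hB a b).symm

theorem mulB_mul_map_mulB (hB : IsRotaBaxter B) (a b : X) :
    mulB B a b * B (mulB B a b) = a * B a * (b * B b) := by
  rw [hB.map_mulB, mulB]
  group

theorem mulB_mulB_invB (hB : IsRotaBaxter B) (a b : X) :
    mulB B (mulB B a b) (invB B a) = hatPhi (fun x y => x * y * x⁻¹) B B a b :=
  calc mulB B (mulB B a b) (invB B a)
    _ = mulB B a b * B (mulB B a b) * invB B a * (B (mulB B a b))⁻¹ := rfl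
    _ = a * B a * (b * B b) * invB B a * (B a * B b)⁻¹ := by
      rw [hB.mulB_mul_map_mulB, hB.map_mulB]
    _ = a * B a * (b * B b) * (a * B a)⁻¹ * (B a * B b * (B a)⁻¹)⁻¹ := by
      rw [invB]
      group

end IsRotaBaxter

section Naturality

variable {H K G : Type*} [Group H] [Group K] [Group G]

theorem map_mulB (f : H →* K) {B : H → H} {C : K → K} (hf : Function.Semiconj f B C) (p q : H) :
    f (mulB B p q) = mulB C (f p) (f q) := by
  simp only [mulB, map_mul, map_inv, hf.eq]

theorem map_hatPhi (f : H →* K) {Φ : G → H → H} {Ψ : G → K → K} {B : H → H} {C : K → K}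
    (hf : Function.Semiconj f B C) (hΦ : ∀ a, Function.Semiconj f (Φ a) (Ψ a))
    (B₀ : G → G) (a : G) (p : H) :
    f (hatPhi Φ B B₀ a p) = hatPhi Ψ C B₀ a (f p) := by
  simp only [hatPhi, map_mul, map_inv, (hΦ _).eq, hf.eq]

theorem hatPhi_map_left (f : K →* G) {C : K → K} {B₀ : G → G} (hf : Function.Semiconj f C B₀)
    (Φ : G → H → H) (B : H → H) (k : K) (p : H) :
    hatPhi Φ B B₀ (f k) p = hatPhi (fun x => Φ (f x)) B C k p := by
  simp only [hatPhi, map_mul, hf.eq]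

end Naturality

theorem stmt4_general {H G : Type*} [Group H] [Group G] (t : H →* G) (Φ : G → H → H)
    (B₁ : H → H) (B₀ : G → G) (hequivar : ∀ a p, t (Φ a p) = a * t p * a⁻¹)
    (hpeiffer : ∀ p q, Φ (t p) q = p * q * p⁻¹) (hB₁ : IsRotaBaxter B₁) (hB₀ : IsRotaBaxter B₀)
    (ht : Function.Semiconj t B₁ B₀) :
    (∀ p q : H, t (mulB B₁ p q) = mulB B₀ (t p) (t q)) ∧
    (∀ (a : G) (p : H),
      t (hatPhi Φ B₁ B₀ a p) = mulB B₀ (mulB B₀ a (t p)) (invB B₀ a)) ∧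
    (∀ p q : H, hatPhi Φ B₁ B₀ (t p) q = mulB B₁ (mulB B₁ p q) (invB B₁ p)) := by
  refine ⟨map_mulB t ht, fun a p => ?_, fun p q => ?_⟩
  · rw [hB₀.mulB_mulB_invB]
    exact map_hatPhi t ht hequivar B₀ a p
  · have hΦ : (fun x => Φ (t x)) = fun x y => x * y * x⁻¹ := funext₂ hpeiffer
    rw [hB₁.mulB_mulB_invB, hatPhi_map_left t ht, hΦ]

theorem stmt4 {H G : Type*} [Group H] [Group G] (t : H → G) (Φ : G → H → H)
    (B₁ : H → H) (B₀ : G → G) (hcm : IsCrossedModule t Φ)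
    (hrb : IsCMRotaBaxter t Φ B₁ B₀) :
    -- (1) t is a homomorphism for the descended multiplications
    (∀ p q : H, t (mulB B₁ p q) = mulB B₀ (t p) (t q)) ∧
    -- (2) t(Φ̂(a)(p)) = a ·_B₀ t(p) ·_B₀ a†, with a† = B₀(a)⁻¹·a⁻¹·B₀(a)
    (∀ (a : G) (p : H),
      t (hatPhi Φ B₁ B₀ a p)
        = mulB B₀ (mulB B₀ a (t p)) ((B₀ a)⁻¹ * a⁻¹ * B₀ a)) ∧
    -- (3) Φ̂(t(p))(q) = p ·_B₁ q ·_B₁ p†, with p† = B₁(p)⁻¹·p⁻¹·B₁(p)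
    (∀ p q : H,
      hatPhi Φ B₁ B₀ (t p) q
        = mulB B₁ (mulB B₁ p q) ((B₁ p)⁻¹ * p⁻¹ * B₁ p)) :=
  stmt4_general (MonoidHom.mk' t hcm.t_mul) Φ B₁ B₀ hcm.equivar hcm.peiffer hrb.rb₁ hrb.rb₀
    hrb.t_comm
end

section
/- Let (𝓑₁, 𝓑₀) be a Rota-Baxter operator on a crossed module of groups (H, G, t, Φ). In the category associated with (H, G, t, Φ) (objects G, morphisms G × H, source 𝔰(a, p) = a, target 𝔱(a, p) = t(p)·a, identity 1_a = (a, e_H), and composition (a, p) ∘ (b, q) = (b, p·q) defined when t(q)·b = a), define 𝓑(a, p) = (𝓑₀(a), Φ(𝓑₀(a))(𝓑₁(Φ(𝓑₀(a)⁻¹·a⁻¹)(p)))). Then (𝓑, 𝓑₀) is a functor from this category to itself; explicitly: (1) 𝔰(𝓑(a, p)) = 𝓑₀(𝔰(a, p)) for all (a, p); (2) 𝔱(𝓑(a, p)) = 𝓑₀(𝔱(a, p)) for all (a, p); (3) 𝓑(a, e_H) = (𝓑₀(a), e_H), i.e. 𝓑(1_a) = 1_{𝓑₀(a)}; (4) whenever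 t(k)·b = a, the composite 𝓑(a, h) ∘ 𝓑(b, k) is defined and equals 𝓑((a, h) ∘ (b, k)). -/
/-- The semidirect product multiplication `(a,p)·_Φ(b,q) = (a·b, p·Φ(a)q)` on `G × H`. -/
def sdpMul {H G : Type*} [Group H] [Group G] (Φ : G → H → H) (m n : G × H) : G × H :=
  (m.1 * n.1, m.2 * Φ m.1 n.2)

/-- The inverse for `sdpMul`. -/
def sdpInv {H G : Type*} [Group H] [Group G] (Φ : G → H → H) (m : G × H) : G × H :=
  (m.1⁻¹, Φ m.1⁻¹ m.2⁻¹)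

/-- The operator `𝓑(a,p) = (B₀(a), Φ(B₀(a))(B₁(Φ(B₀(a)⁻¹·a⁻¹)(p))))` on `G ⋉_Φ H`. -/
def Bcal {H G : Type*} [Group H] [Group G] (Φ : G → H → H)
    (B₁ : H → H) (B₀ : G → G) (m : G × H) : G × H :=
  (B₀ m.1, Φ (B₀ m.1) (B₁ (Φ ((B₀ m.1)⁻¹ * m.1⁻¹) m.2)))

/-- The Yang-Baxter map `R(m,n) = (Ad_{B(m)}(n), Ad_{B(c)⁻¹·c⁻¹}(m))`, `c = Ad_{B(m)}(n)`,
written for an abstract multiplication `mul` and inversion `inv`. -/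
def Rgen {X : Type*} (mul : X → X → X) (inv : X → X) (B : X → X) (z : X × X) : X × X :=
  let c := mul (mul (B z.1) z.2) (inv (B z.1))
  let d := mul (inv (B c)) (inv c)
  (c, mul (mul d z.1) (inv d))

/-- Composition of morphisms in the category associated with a crossed module:
`(a,p) ∘ (b,q) = (b, p·q)` (defined when `t(q)·b = a`). -/
def catComp {H G : Type*} [Group H] (m n : G × H) : G × H := (n.1, m.2 * n.2)

/-!
The descendent product `a ∘ b = a * B a * b * (B a)⁻¹` of a Rota-Baxter operator `B` makes both
`a ↦ B a` and `a ↦ a * B a` multiplicative. Write `τ a p = Φ (a * B₀ a)⁻¹ p`, so that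
`𝓑 (a, p) = (B₀ a, Φ (B₀ a) (B₁ (τ a p)))`. Equivariance of `t` turns the target of `(a, p)` into
the descendent product `t p * a = a ∘ t (τ a p)`, and the Peiffer identity gives the cocycle
identity `τ a (q * p) = τ a p ∘ τ (t p * a) q`. Applying `B₀` to the first formula shows that `𝓑`
preserves targets; applying `B₁` to the second shows that it preserves composition.
-/

/-- The descendent product `a ∘ b` of an operator `B` on a group: the Rota-Baxter identity says
that `B` is multiplicative from this product to the original one. -/
def descendentMul {G : Type*} [Group G] (B : G → G) (a b : G) : G :=
  a * B a * b * (B a)⁻¹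

namespace IsRotaBaxter

variable {G : Type*} [Group G] {B : G → G}

theorem map_one (hB : IsRotaBaxter B) : B 1 = 1 := by
  simpa using hB 1 1

theorem map_descendentMul (hB : IsRotaBaxter B) (a b : G) :
    B (descendentMul B a b) = B a * B b :=
  (hB a b).symm

theorem descendentMul_mul_map (hB : IsRotaBaxter B) (a b : G) :
    descendentMul B a b * B (descendentMul B a b) = a * B a * (b * B b) := by
  rw [hB.map_descendentMul, descendentMul]
  group

end IsRotaBaxter

namespace IsCrossedModule

variable {H G : Type*} [Group H] [Group G] {t : H → G} {Φ : G → H → H}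

theorem act_one (hcm : IsCrossedModule t Φ) (a : G) : Φ a 1 = 1 := by
  simpa using hcm.Φ_mul_hom a 1 1

theorem act_inv_act (hcm : IsCrossedModule t Φ) (a : G) (p : H) : Φ a⁻¹ (Φ a p) = p := by
  rw [← hcm.Φ_mul, inv_mul_cancel, hcm.Φ_one]

theorem act_inv_t (hcm : IsCrossedModule t Φ) (p q : H) : Φ (t p)⁻¹ q = p⁻¹ * q * p := by
  calc Φ (t p)⁻¹ q = Φ (t p)⁻¹ (Φ (t p) (p⁻¹ * q * p)) := by rw [hcm.peiffer]; group
    _ = p⁻¹ * q * p := hcm.act_inv_act _ _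

theorem act_mul_t_mul_act (hcm : IsCrossedModule t Φ) (a : G) (p q : H) :
    Φ (a * t p) q * Φ a p = Φ a (p * q) := by
  rw [hcm.Φ_mul, hcm.peiffer, ← hcm.Φ_mul_hom, inv_mul_cancel_right]

end IsCrossedModule

/-- The twist `τ a p = Φ (a * B a)⁻¹ p`, the argument of `B₁` in the second component of
`𝓑 (a, p)`. The inverse is written out as in `Bcal`, so that the two agree definitionally. -/
def rotaBaxterTwist {H G : Type*} [Group G] (Φ : G → H → H) (B : G → G) (a : G) (p : H) : H :=
  Φ ((B a)⁻¹ * a⁻¹) p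

section

variable {H G : Type*} [Group H] [Group G] {t : H → G} {Φ : G → H → H} {B₁ : H → H} {B₀ : G → G}

theorem rotaBaxterTwist_mul (hcm : IsCrossedModule t Φ) (B : G → G) (a : G) (p q : H) :
    rotaBaxterTwist Φ B a (p * q) = rotaBaxterTwist Φ B a p * rotaBaxterTwist Φ B a q :=
  hcm.Φ_mul_hom _ p q

theorem descendentMul_t_rotaBaxterTwist (hcm : IsCrossedModule t Φ) (B : G → G) (a : G) (p : H) :
    descendentMul B a (t (rotaBaxterTwist Φ B a p)) = t p * a := by
  rw [descendentMul, rotaBaxterTwist, hcm.equivar]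
  group

theorem map_t_mul (hcm : IsCrossedModule t Φ) (hB₀ : IsRotaBaxter B₀)
    (ht : Function.Semiconj t B₁ B₀) (a : G) (p : H) :
    B₀ (t p * a) = B₀ a * t (B₁ (rotaBaxterTwist Φ B₀ a p)) := by
  rw [← descendentMul_t_rotaBaxterTwist hcm B₀, hB₀.map_descendentMul, ht.eq]

theorem rotaBaxterTwist_t_mul (hcm : IsCrossedModule t Φ) (hB₀ : IsRotaBaxter B₀)
    (ht : Function.Semiconj t B₁ B₀) (a : G) (p q : H) :
    let r := rotaBaxterTwist Φ B₀ a p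
    rotaBaxterTwist Φ B₀ (t p * a) q = (r * B₁ r)⁻¹ * rotaBaxterTwist Φ B₀ a q * (r * B₁ r) := by
  intro r
  have mul_map : t p * a * B₀ (t p * a) = a * B₀ a * t (r * B₁ r) := by
    rw [← descendentMul_t_rotaBaxterTwist hcm B₀, hB₀.descendentMul_mul_map, hcm.t_mul, ht.eq]
  rw [← hcm.act_inv_t, rotaBaxterTwist, rotaBaxterTwist, ← hcm.Φ_mul, ← mul_inv_rev, mul_map,
    mul_inv_rev, mul_inv_rev]

theorem descendentMul_rotaBaxterTwist (hcm : IsCrossedModule t Φ) (hB₀ : IsRotaBaxter B₀)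
    (ht : Function.Semiconj t B₁ B₀) (a : G) (p q : H) :
    descendentMul B₁ (rotaBaxterTwist Φ B₀ a p) (rotaBaxterTwist Φ B₀ (t p * a) q) =
      rotaBaxterTwist Φ B₀ a (q * p) := by
  rw [rotaBaxterTwist_t_mul hcm hB₀ ht, rotaBaxterTwist_mul hcm, descendentMul]
  group

theorem t_Bcal_mul (hcm : IsCrossedModule t Φ) (hB₀ : IsRotaBaxter B₀)
    (ht : Function.Semiconj t B₁ B₀) (m : G × H) :
    t (Bcal Φ B₁ B₀ m).2 * (Bcal Φ B₁ B₀ m).1 = B₀ (t m.2 * m.1) := by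
  rw [map_t_mul hcm hB₀ ht, Bcal, hcm.equivar, inv_mul_cancel_right, rotaBaxterTwist]

theorem Bcal_one (hcm : IsCrossedModule t Φ) (hB₁ : IsRotaBaxter B₁) (B₀ : G → G) (a : G) :
    Bcal Φ B₁ B₀ (a, 1) = (B₀ a, 1) := by
  rw [Bcal, hcm.act_one, hB₁.map_one, hcm.act_one]

theorem catComp_Bcal (hcm : IsCrossedModule t Φ) (hB₁ : IsRotaBaxter B₁) (hB₀ : IsRotaBaxter B₀)
    (ht : Function.Semiconj t B₁ B₀) (a : G) (p q : H) :
    catComp (Bcal Φ B₁ B₀ (t p * a, q)) (Bcal Φ B₁ B₀ (a, p)) =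
      Bcal Φ B₁ B₀ (catComp (t p * a, q) (a, p)) := by
  let τ := rotaBaxterTwist Φ B₀
  refine Prod.ext rfl ?_
  calc Φ (B₀ (t p * a)) (B₁ (τ (t p * a) q)) * Φ (B₀ a) (B₁ (τ a p))
      = Φ (B₀ a) (B₁ (τ a p) * B₁ (τ (t p * a) q)) := by
        rw [map_t_mul hcm hB₀ ht, hcm.act_mul_t_mul_act]
    _ = Φ (B₀ a) (B₁ (τ a (q * p))) := by
        rw [← hB₁.map_descendentMul, descendentMul_rotaBaxterTwist hcm hB₀ ht]

end

theorem stmt12_general {H G : Type*} [Group H] [Group G] {t : H → G} {Φ : G → H → H}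
    {B₁ : H → H} {B₀ : G → G} (hcm : IsCrossedModule t Φ) (hB₁ : IsRotaBaxter B₁)
    (hB₀ : IsRotaBaxter B₀) (ht : Function.Semiconj t B₁ B₀) :
    (∀ m : G × H, (Bcal Φ B₁ B₀ m).1 = B₀ m.1) ∧
    (∀ m : G × H, t (Bcal Φ B₁ B₀ m).2 * (Bcal Φ B₁ B₀ m).1 = B₀ (t m.2 * m.1)) ∧
    (∀ a : G, Bcal Φ B₁ B₀ (a, (1 : H)) = (B₀ a, (1 : H))) ∧
    (∀ (a b : G) (h k : H), t k * b = a →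
      (t (Bcal Φ B₁ B₀ (b, k)).2 * (Bcal Φ B₁ B₀ (b, k)).1 = (Bcal Φ B₁ B₀ (a, h)).1 ∧
        catComp (Bcal Φ B₁ B₀ (a, h)) (Bcal Φ B₁ B₀ (b, k))
          = Bcal Φ B₁ B₀ (catComp (a, h) (b, k)))) := by
  refine ⟨fun _ => rfl, t_Bcal_mul hcm hB₀ ht, Bcal_one hcm hB₁ B₀, ?_⟩
  rintro _ b h k rfl
  exact ⟨t_Bcal_mul hcm hB₀ ht (b, k), catComp_Bcal hcm hB₁ hB₀ ht b k h⟩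

theorem stmt12 {H G : Type*} [Group H] [Group G] (t : H → G) (Φ : G → H → H)
    (B₁ : H → H) (B₀ : G → G) (hcm : IsCrossedModule t Φ)
    (hrb : IsCMRotaBaxter t Φ B₁ B₀) :
    -- (1) 𝔰(𝓑(a,p)) = 𝓑₀(𝔰(a,p))
    (∀ m : G × H, (Bcal Φ B₁ B₀ m).1 = B₀ m.1) ∧
    -- (2) 𝔱(𝓑(a,p)) = 𝓑₀(𝔱(a,p))
    (∀ m : G × H, t (Bcal Φ B₁ B₀ m).2 * (Bcal Φ B₁ B₀ m).1 = B₀ (t m.2 * m.1)) ∧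
    -- (3) 𝓑 preserves identity morphisms
    (∀ a : G, Bcal Φ B₁ B₀ (a, (1 : H)) = (B₀ a, (1 : H))) ∧
    -- (4) 𝓑 preserves composition: whenever t(k)·b = a, the composite of
    -- 𝓑(a,h) and 𝓑(b,k) is defined and equals 𝓑((a,h) ∘ (b,k))
    (∀ (a b : G) (h k : H), t k * b = a →
      (t (Bcal Φ B₁ B₀ (b, k)).2 * (Bcal Φ B₁ B₀ (b, k)).1 = (Bcal Φ B₁ B₀ (a, h)).1 ∧
        catComp (Bcal Φ B₁ B₀ (a, h)) (Bcal Φ B₁ B₀ (b, k))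
          = Bcal Φ B₁ B₀ (catComp (a, h) (b, k)))) :=
  stmt12_general hcm hrb.rb₁ hrb.rb₀ hrb.t_comm
end
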